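/- arXiv:math-ph/9812015 — 13 statements merged into one kernel-verified Lean document; each statement's English description precedes it below -/
import Mathlib

section
/- Let (Ω, F, μ) be a probability space, β ∈ ℝ, T : Ω → Ω a measurable map with T ∘ T = id, and R : Ω → ℝ a bounded measurable function satisfying R ∘ T = −R. Assume the Gibbs change-of-variables property: for every bounded measurable f : Ω → ℝ, ∫ (f ∘ T) dμ = ∫ f · exp(−β R) dμ. Then for every λ ∈ ℝ, ∫ exp(−λ β R) dμ = ∫ exp(−(1−λ) β R) dμ. -/
open MeasureTheory Real

/-- The finite-volume Gibbs fluctuation identity (equation (1.14) of the paper):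
if `μ` is a probability measure, `T` an involution, `R` a bounded measurable function
antisymmetric under `T`, and the Gibbs change-of-variables property
`∫ f ∘ T dμ = ∫ f · exp(-β R) dμ` holds for every bounded measurable `f`, then
`∫ exp(-λ β R) dμ = ∫ exp(-(1-λ) β R) dμ` for every real `λ`. -/
theorem fluctuation_identity_of_gibbs
    {Ω : Type*} [MeasurableSpace Ω] (μ : Measure Ω) [IsProbabilityMeasure μ]
    (β : ℝ) (T : Ω → Ω) (hTmeas : Measurable T) (hTinv : T ∘ T = id)
    (R : Ω → ℝ) (hRmeas : Measurable R) (hRbdd : ∃ C : ℝ, ∀ ω, |R ω| ≤ C)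
    (hRanti : R ∘ T = fun ω => - R ω)
    (hGibbs : ∀ f : Ω → ℝ, Measurable f → (∃ C : ℝ, ∀ ω, |f ω| ≤ C) →
      ∫ ω, f (T ω) ∂μ = ∫ ω, f ω * Real.exp (-β * R ω) ∂μ) :
    ∀ lam : ℝ,
      ∫ ω, Real.exp (-lam * β * R ω) ∂μ =
        ∫ ω, Real.exp (-(1 - lam) * β * R ω) ∂μ := by
  intro lam
  obtain ⟨C, hC⟩ := hRbdd
  have hT : ∀ ω, R (T ω) = - R ω := fun ω => congrFun hRanti ω
  have h := hGibbs (fun ω => Real.exp (lam * β * R ω))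
    (Real.measurable_exp.comp (hRmeas.const_mul (lam * β)))
    ⟨Real.exp (|lam * β| * C), fun ω => by
      rw [abs_of_pos (Real.exp_pos _)]
      apply Real.exp_le_exp.mpr
      calc lam * β * R ω ≤ |lam * β * R ω| := le_abs_self _
        _ = |lam * β| * |R ω| := abs_mul _ _
        _ ≤ |lam * β| * C := mul_le_mul_of_nonneg_left (hC ω) (abs_nonneg _)⟩
  calc ∫ ω, Real.exp (-lam * β * R ω) ∂μ
      = ∫ ω, Real.exp (lam * β * R (T ω)) ∂μ := by
        congr 1
        funext ω
        rw [hT]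
        congr 1
        ring
    _ = ∫ ω, Real.exp (lam * β * R ω) * Real.exp (-β * R ω) ∂μ := h
    _ = ∫ ω, Real.exp (-(1 - lam) * β * R ω) ∂μ := by
        congr 1
        funext ω
        rw [← Real.exp_add]
        congr 1
        ring
end

section
/- Let (Ω, F, μ) be a probability space, β ∈ ℝ, m ≥ 1, E = (E^1,…,E^m) ∈ ℝ^m, T : Ω → Ω a measurable map with T ∘ T = id, and R^0, R^1, …, R^m : Ω → ℝ bounded measurable functions with R^α ∘ T = −R^α for every α = 0, 1, …, m. Assume that for every bounded measurable f : Ω → ℝ, ∫ (f ∘ T) dμ = ∫ f · exp(−β (R^0 + Σ_{α=1}^m E^α R^α)) dμ. Then for every (h_1,…,h_m) ∈ ℝ^m, ∫ exp(−β R^0 − β Σ_{α=1}^m h_α E^α R^α) dμ = ∫ exp(−β Σ_{α=1}^m (1−h_α) E^α R^α) dμ. -/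
open MeasureTheory Real

/-- The multi-field exact Gibbs identity (equation (toep) in the proof of Theorem 1):
if `μ` is a probability measure, `T` an involution, `R0, R 1, …, R m` bounded measurable
functions antisymmetric under `T`, and the Gibbs change-of-variables property holds for
the Hamiltonian `R0 + Σ_α E^α R^α`, then for every `h ∈ ℝ^m`,
`∫ exp(-β R0 - β Σ_α h_α E^α R^α) dμ = ∫ exp(-β Σ_α (1-h_α) E^α R^α) dμ`. -/
theorem multi_field_fluctuation_identity_of_gibbs
    {Ω : Type*} [MeasurableSpace Ω] (μ : Measure Ω) [IsProbabilityMeasure μ]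
    (β : ℝ) (m : ℕ) (hm : 1 ≤ m) (E : Fin m → ℝ)
    (T : Ω → Ω) (hTmeas : Measurable T) (hTinv : T ∘ T = id)
    (R0 : Ω → ℝ) (hR0meas : Measurable R0) (hR0bdd : ∃ C : ℝ, ∀ ω, |R0 ω| ≤ C)
    (hR0anti : R0 ∘ T = fun ω => - R0 ω)
    (R : Fin m → Ω → ℝ) (hRmeas : ∀ α, Measurable (R α))
    (hRbdd : ∀ α, ∃ C : ℝ, ∀ ω, |R α ω| ≤ C)
    (hRanti : ∀ α, R α ∘ T = fun ω => - R α ω)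
    (hGibbs : ∀ f : Ω → ℝ, Measurable f → (∃ C : ℝ, ∀ ω, |f ω| ≤ C) →
      ∫ ω, f (T ω) ∂μ =
        ∫ ω, f ω * Real.exp (-β * (R0 ω + ∑ α, E α * R α ω)) ∂μ) :
    ∀ h : Fin m → ℝ,
      ∫ ω, Real.exp (-β * R0 ω - β * ∑ α, h α * E α * R α ω) ∂μ =
        ∫ ω, Real.exp (-β * ∑ α, (1 - h α) * E α * R α ω) ∂μ := by
  intro h
  choose C hC using hRbdd
  have key := hGibbs (fun ω => Real.exp (β * ∑ α, (1 - h α) * E α * R α ω))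
    (by fun_prop)
    ⟨Real.exp (|β| * ∑ α, |(1 - h α) * E α| * C α), fun ω => by
      rw [abs_of_pos (Real.exp_pos _)]
      apply Real.exp_le_exp.mpr
      refine (le_abs_self _).trans ?_
      rw [abs_mul]
      refine mul_le_mul_of_nonneg_left ?_ (abs_nonneg _)
      refine (Finset.abs_sum_le_sum_abs _ _).trans ?_
      refine Finset.sum_le_sum fun α _ => ?_
      rw [abs_mul]
      exact mul_le_mul_of_nonneg_left (hC α ω) (abs_nonneg _)⟩
  have hT : ∀ α ω, R α (T ω) = - R α ω := fun α ω => congrFun (hRanti α) ω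
  have h1 : ∀ ω, Real.exp (β * ∑ α, (1 - h α) * E α * R α (T ω)) =
      Real.exp (-β * ∑ α, (1 - h α) * E α * R α ω) := by
    intro ω
    simp only [hT, mul_neg, Finset.sum_neg_distrib, neg_mul]
  have h2 : ∀ ω, Real.exp (β * ∑ α, (1 - h α) * E α * R α ω) *
      Real.exp (-β * (R0 ω + ∑ α, E α * R α ω)) =
      Real.exp (-β * R0 ω - β * ∑ α, h α * E α * R α ω) := by
    intro ω
    rw [← Real.exp_add]
    congr 1
    have : ∑ α, (1 - h α) * E α * R α ω =
        ∑ α, E α * R α ω - ∑ α, h α * E α * R α ω := by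
      rw [← Finset.sum_sub_distrib]
      exact Finset.sum_congr rfl fun α _ => by ring
    rw [this]
    ring
  simp only [h1, h2] at key
  exact key.symm
end

section
/- Let (Ω, F, μ) be a probability space, β ∈ ℝ, m ≥ 1, and E = (E^1,…,E^m) ∈ ℝ^m. Let (a_n)_{n≥1} be positive reals with a_n → ∞. For each n let T_n : Ω → Ω be a measurable map with T_n ∘ T_n = id, and let R_n^0, R_n^1, …, R_n^m : Ω → ℝ be bounded measurable functions with R_n^α ∘ T_n = −R_n^α for α = 0, 1, …, m, such that for every bounded measurable f : Ω → ℝ, ∫ (f ∘ T_n) dμ = ∫ f · exp(−β (R_n^0 + Σ_{α=1}^m E^α R_n^α)) dμ. Let S_n^1, …, S_n^m : Ω → ℝ be bounded measurable functions with ‖R_n^α − 2 S_n^α‖_∞ / a_n → 0 for each α = 1,…,m, and assume ‖R_n^0‖_∞ / a_n → 0. Fix λ = (λ_1,…,λ_m) ∈ ℝ^m and suppose that both limits p(λ) = −lim_n (1/a_n) · ln ∫ exp(−β Σ_{α=1}^m λ_α S_n^α) dμ and p(2E−λ) = −lim_n (1/a_n) · ln ∫ exp(−β Σ_{α=1}^m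 (2E^α − λ_α) S_n^α) dμ exist in ℝ. Then p(λ) = p(2E−λ). -/
open MeasureTheory Real Filter

lemma aux_integrable {Ω : Type*} [MeasurableSpace Ω] (μ : Measure Ω) [IsProbabilityMeasure μ]
    (X : Ω → ℝ) (hX : Measurable X) (hb : ∃ C : ℝ, ∀ ω, |X ω| ≤ C) :
    Integrable (fun ω => Real.exp (X ω)) μ := by
  obtain ⟨C, hC⟩ := hb
  refine Integrable.of_bound (C := Real.exp C) (by fun_prop) (ae_of_all _ fun ω => ?_)
  rw [Real.norm_eq_abs, abs_of_pos (Real.exp_pos _)]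
  exact Real.exp_le_exp.2 ((le_abs_self _).trans (hC ω))

lemma aux_log_le {Ω : Type*} [MeasurableSpace Ω] (μ : Measure Ω) [IsProbabilityMeasure μ]
    (X Y : Ω → ℝ) (hX : Measurable X) (hXb : ∃ C : ℝ, ∀ ω, |X ω| ≤ C)
    (hY : Measurable Y) (hYb : ∃ C : ℝ, ∀ ω, |Y ω| ≤ C) (d : ℝ)
    (h : ∀ ω, |X ω - Y ω| ≤ d) :
    Real.log (∫ ω, Real.exp (X ω) ∂μ) ≤ Real.log (∫ ω, Real.exp (Y ω) ∂μ) + d := by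
  have iX := aux_integrable μ X hX hXb
  have iY := aux_integrable μ Y hY hYb
  have pX : 0 < ∫ ω, Real.exp (X ω) ∂μ := integral_exp_pos iX
  have pY : 0 < ∫ ω, Real.exp (Y ω) ∂μ := integral_exp_pos iY
  have : ∫ ω, Real.exp (X ω) ∂μ ≤ (∫ ω, Real.exp (Y ω) ∂μ) * Real.exp d := by
    rw [← integral_mul_const]
    refine integral_mono iX (iY.mul_const _) fun ω => ?_
    change Real.exp (X ω) ≤ Real.exp (Y ω) * Real.exp d
    rw [← Real.exp_add]
    exact Real.exp_le_exp.2 (by linarith [(abs_le.1 (h ω)).2])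
  have h2 := Real.log_le_log pX this
  rwa [Real.log_mul pY.ne' (Real.exp_pos d).ne', Real.log_exp] at h2

lemma aux_log_abs {Ω : Type*} [MeasurableSpace Ω] (μ : Measure Ω) [IsProbabilityMeasure μ]
    (X Y : Ω → ℝ) (hX : Measurable X) (hXb : ∃ C : ℝ, ∀ ω, |X ω| ≤ C)
    (hY : Measurable Y) (hYb : ∃ C : ℝ, ∀ ω, |Y ω| ≤ C) (d : ℝ)
    (h : ∀ ω, |X ω - Y ω| ≤ d) :
    |Real.log (∫ ω, Real.exp (X ω) ∂μ) - Real.log (∫ ω, Real.exp (Y ω) ∂μ)| ≤ d := by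
  have h1 := aux_log_le μ X Y hX hXb hY hYb d h
  have h2 := aux_log_le μ Y X hY hYb hX hXb d (fun ω => by rw [abs_sub_comm]; exact h ω)
  rw [abs_le]; constructor <;> linarith

lemma aux_sum_bdd {Ω : Type*} {m : ℕ} (l : Fin m → ℝ) (R : Fin m → Ω → ℝ) (c : Fin m → ℝ)
    (h : ∀ α ω, |R α ω| ≤ c α) (ω : Ω) : |∑ α, l α * R α ω| ≤ ∑ α, |l α| * c α := by
  refine (Finset.abs_sum_le_sum_abs _ _).trans (Finset.sum_le_sum fun α _ => ?_)
  rw [abs_mul]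
  exact mul_le_mul_of_nonneg_left (h α ω) (abs_nonneg _)

/-- Abstract form of Theorem 1 of the paper (fluctuation theorem for Gibbs states,
`p(λ,E) = p(2E−λ,E)`): given a sequence of involutive symmetries `T n` with antisymmetric
relative energies `R0 n, R n α` for which the Gibbs change-of-variables identity holds,
and current sums `S n α` approximating `R n α / 2` up to `o(a n)` boundary terms, if the
two free-energy limits `p(λ)` and `p(2E−λ)` exist then they are equal. -/
theorem fluctuation_theorem_for_gibbs_states
    {Ω : Type*} [MeasurableSpace Ω] (μ : Measure Ω) [IsProbabilityMeasure μ]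
    (β : ℝ) (m : ℕ) (hm : 1 ≤ m) (E : Fin m → ℝ)
    (a : ℕ → ℝ) (ha : ∀ n, 0 < a n) (haTop : Tendsto a atTop atTop)
    (T : ℕ → Ω → Ω) (hTmeas : ∀ n, Measurable (T n)) (hTinv : ∀ n, T n ∘ T n = id)
    (R0 : ℕ → Ω → ℝ) (hR0meas : ∀ n, Measurable (R0 n))
    (hR0bdd : ∀ n, ∃ C : ℝ, ∀ ω, |R0 n ω| ≤ C)
    (hR0anti : ∀ n, R0 n ∘ T n = fun ω => - R0 n ω)
    (R : ℕ → Fin m → Ω → ℝ) (hRmeas : ∀ n α, Measurable (R n α))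
    (hRbdd : ∀ n α, ∃ C : ℝ, ∀ ω, |R n α ω| ≤ C)
    (hRanti : ∀ n α, R n α ∘ T n = fun ω => - R n α ω)
    (hGibbs : ∀ n, ∀ f : Ω → ℝ, Measurable f → (∃ C : ℝ, ∀ ω, |f ω| ≤ C) →
      ∫ ω, f (T n ω) ∂μ =
        ∫ ω, f ω * Real.exp (-β * (R0 n ω + ∑ α, E α * R n α ω)) ∂μ)
    (S : ℕ → Fin m → Ω → ℝ) (hSmeas : ∀ n α, Measurable (S n α))
    (hSbdd : ∀ n α, ∃ C : ℝ, ∀ ω, |S n α ω| ≤ C)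
    (hRS : ∀ α, ∃ c : ℕ → ℝ, (∀ n ω, |R n α ω - 2 * S n α ω| ≤ c n) ∧
      Tendsto (fun n => c n / a n) atTop (nhds 0))
    (hR0small : ∃ c : ℕ → ℝ, (∀ n ω, |R0 n ω| ≤ c n) ∧
      Tendsto (fun n => c n / a n) atTop (nhds 0))
    (lam : Fin m → ℝ) (plam p2Elam : ℝ)
    (hplam : Tendsto
      (fun n => - (1 / a n) *
        Real.log (∫ ω, Real.exp (-β * ∑ α, lam α * S n α ω) ∂μ))
      atTop (nhds plam))
    (hp2Elam : Tendsto
      (fun n => - (1 / a n) *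
        Real.log (∫ ω, Real.exp (-β * ∑ α, (2 * E α - lam α) * S n α ω) ∂μ))
      atTop (nhds p2Elam)) :
    plam = p2Elam := by
  choose c hc hct using hRS
  obtain ⟨c0, hc0, hc0t⟩ := hR0small
  choose CR hCR using hRbdd
  choose CS hCS using hSbdd
  -- the exponents
  have bS : ∀ (l : Fin m → ℝ) n, ∃ C : ℝ, ∀ ω, |(-β) * ∑ α, l α * S n α ω| ≤ C := fun l n =>
    ⟨|(-β)| * ∑ α, |l α| * CS n α, fun ω => by
      rw [abs_mul]
      exact mul_le_mul_of_nonneg_left (aux_sum_bdd l (S n) (CS n) (hCS n) ω) (abs_nonneg _)⟩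
  have bR : ∀ (b : ℝ) (l : Fin m → ℝ) n, ∃ C : ℝ, ∀ ω, |b * ∑ α, l α * R n α ω| ≤ C :=
    fun b l n => ⟨|b| * ∑ α, |l α| * CR n α, fun ω => by
      rw [abs_mul]
      exact mul_le_mul_of_nonneg_left (aux_sum_bdd l (R n) (CR n) (hCR n) ω) (abs_nonneg _)⟩
  have bR0 : ∀ (l : Fin m → ℝ) n, ∃ C : ℝ, ∀ ω,
      |(-β) * (R0 n ω + ∑ α, l α * R n α ω)| ≤ C :=
    fun l n => ⟨|(-β)| * (c0 n + ∑ α, |l α| * CR n α), fun ω => by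
      rw [abs_mul]
      exact mul_le_mul_of_nonneg_left ((abs_add_le _ _).trans
        (add_le_add (hc0 n ω) (aux_sum_bdd l (R n) (CR n) (hCR n) ω))) (abs_nonneg _)⟩
  have mS : ∀ (l : Fin m → ℝ) n, Measurable fun ω => (-β) * ∑ α, l α * S n α ω := fun l n =>
    (Finset.measurable_sum _ fun α _ => (hSmeas n α).const_mul _).const_mul _
  have mR : ∀ (b : ℝ) (l : Fin m → ℝ) n, Measurable fun ω => b * ∑ α, l α * R n α ω :=
    fun b l n => (Finset.measurable_sum _ fun α _ => (hRmeas n α).const_mul _).const_mul _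
  have mR0 : ∀ (l : Fin m → ℝ) n,
      Measurable fun ω => (-β) * (R0 n ω + ∑ α, l α * R n α ω) :=
    fun l n => ((hR0meas n).add
      (Finset.measurable_sum _ fun α _ => (hRmeas n α).const_mul _)).const_mul _
  have key : ∀ n, ∫ ω, Real.exp ((-β) * ∑ α, (lam α / 2) * R n α ω) ∂μ =
      ∫ ω, Real.exp ((-β) * (R0 n ω + ∑ α, (E α - lam α / 2) * R n α ω)) ∂μ := by
    intro n
    have h := hGibbs n (fun ω => Real.exp (β * ∑ α, (lam α / 2) * R n α ω))
      (mR _ _ n).exp (by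
        obtain ⟨C, hC⟩ := bR β (fun α => lam α / 2) n
        refine ⟨Real.exp C, fun ω => ?_⟩
        rw [abs_of_pos (Real.exp_pos _)]
        exact Real.exp_le_exp.2 ((le_abs_self _).trans (hC ω)))
    have e1 : ∀ α ω, R n α (T n ω) = - R n α ω := fun α ω => congrFun (hRanti n α) ω
    simp only [e1, ← Real.exp_add] at h
    convert h using 4 with ω ω
    · simp
    · simp only [sub_mul, Finset.sum_sub_distrib]
      ring
  have diffb : ∀ (l : Fin m → ℝ) n ω, |∑ α, l α * S n α ω - ∑ α, (l α / 2) * R n α ω| ≤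
      ∑ α, |l α / 2| * c α n := by
    intro l n ω
    have := aux_sum_bdd (fun α => l α / 2) (fun α ω => R n α ω - 2 * S n α ω) (fun α => c α n)
      (fun α ω => hc α n ω) ω
    rw [abs_sub_comm, ← Finset.sum_sub_distrib]
    convert this using 3 with α
    ring
  set d : ℕ → ℝ := fun n => |(-β)| * (∑ α, |lam α / 2| * c α n) +
    |(-β)| * (c0 n + ∑ α, |(2 * E α - lam α) / 2| * c α n) with hd
  have bound : ∀ n, |Real.log (∫ ω, Real.exp (-β * ∑ α, lam α * S n α ω) ∂μ) -
      Real.log (∫ ω, Real.exp (-β * ∑ α, (2 * E α - lam α) * S n α ω) ∂μ)| ≤ d n := by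
    intro n
    have h1 := aux_log_abs μ _ _ (mS lam n) (bS lam n) (mR (-β) (fun α => lam α / 2) n)
      (bR (-β) (fun α => lam α / 2) n) (|(-β)| * (∑ α, |lam α / 2| * c α n)) (fun ω => by
        rw [← mul_sub, abs_mul]
        exact mul_le_mul_of_nonneg_left (diffb lam n ω) (abs_nonneg _))
    have h2 := aux_log_abs μ _ _ (mR0 (fun α => E α - lam α / 2) n)
      (bR0 (fun α => E α - lam α / 2) n)
      (mS (fun α => 2 * E α - lam α) n) (bS (fun α => 2 * E α - lam α) n)
      (|(-β)| * (c0 n + ∑ α, |(2 * E α - lam α) / 2| * c α n)) (fun ω => by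
        rw [← mul_sub, abs_mul]
        refine mul_le_mul_of_nonneg_left ?_ (abs_nonneg _)
        have h3 := diffb (fun α => 2 * E α - lam α) n ω
        have e : ∀ α, (2 * E α - lam α) / 2 = E α - lam α / 2 := fun α => by ring
        simp only [e] at h3 ⊢
        rw [abs_sub_comm] at h3
        rw [add_sub_assoc]
        exact (abs_add_le _ _).trans (add_le_add (hc0 n ω) h3))
    rw [key n] at h1
    exact (abs_sub_le _ _ _).trans (add_le_add h1 h2)
  have dlim : Tendsto (fun n => d n / a n) atTop (nhds 0) := by
    have hs : ∀ l : Fin m → ℝ, Tendsto (fun n => ∑ α, l α * (c α n / a n)) atTop (nhds 0) := by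
      intro l
      have := tendsto_finsetSum (Finset.univ : Finset (Fin m))
        (fun α _ => (hct α).const_mul (l α))
      simpa using this
    have := ((hs fun α => |lam α / 2|).const_mul |(-β)|).add
      ((hc0t.add (hs fun α => |(2 * E α - lam α) / 2|)).const_mul |(-β)|)
    simp only [mul_zero, add_zero] at this
    refine this.congr fun n => ?_
    simp only [hd, add_div, mul_div_assoc, Finset.sum_div]
  have hdiff := hplam.sub hp2Elam
  have h0 := squeeze_zero_norm (fun n => ?_) dlim (f := fun n => - (1 / a n) *
        Real.log (∫ ω, Real.exp (-β * ∑ α, lam α * S n α ω) ∂μ) - - (1 / a n) *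
        Real.log (∫ ω, Real.exp (-β * ∑ α, (2 * E α - lam α) * S n α ω) ∂μ))
  · exact sub_eq_zero.1 (tendsto_nhds_unique hdiff h0)
  · rw [← mul_sub, Real.norm_eq_abs, abs_mul, abs_neg, abs_of_pos (one_div_pos.2 (ha n)),
      one_div, div_eq_inv_mul]
    exact mul_le_mul_of_nonneg_left (bound n) (inv_nonneg.2 (ha n).le)
end

section
/- Let p : ℝ → ℝ satisfy p(λ) = p(1 − λ) for all λ ∈ ℝ, and define i : ℝ → ℝ ∪ {+∞} by i(w) = sup_{λ ∈ ℝ} (p(λ) − λ w). Then for every w ∈ ℝ, i(w) + w = i(−w) (an equality of extended real numbers), i.e. i(w) − i(−w) = −w whenever both values are finite. -/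
/-- Gallavotti–Cohen fluctuation-theorem symmetry (equation (cg) of the paper) in one
dimension: if `p : ℝ → ℝ` satisfies `p(λ) = p(1 − λ)`, then its Legendre transform
`i(w) = sup_λ (p(λ) − λ w)` (with values in the extended reals) satisfies
`i(w) + w = i(−w)` for every `w`, i.e. `i(w) − i(−w) = −w` whenever both are finite. -/
theorem legendre_transform_fluctuation_symmetry_one_dim
    (p : ℝ → ℝ) (hsym : ∀ lam : ℝ, p lam = p (1 - lam)) :
    ∀ w : ℝ,
      (⨆ lam : ℝ, ((p lam - lam * w : ℝ) : EReal)) + (w : EReal) =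
        ⨆ lam : ℝ, ((p lam - lam * (-w) : ℝ) : EReal) := by
  intro w
  apply le_antisymm
  · rw [← EReal.le_sub_iff_add_le (Or.inl (EReal.coe_ne_bot w)) (Or.inl (EReal.coe_ne_top w))]
    refine iSup_le fun l => ?_
    rw [EReal.le_sub_iff_add_le (Or.inl (EReal.coe_ne_bot w)) (Or.inl (EReal.coe_ne_top w))]
    refine le_trans (le_of_eq ?_)
      (le_iSup (fun lam : ℝ => ((p lam - lam * (-w) : ℝ) : EReal)) (1 - l))
    rw [← EReal.coe_add, EReal.coe_eq_coe_iff, ← hsym l]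
    ring
  · refine iSup_le fun l => ?_
    have h : ((p l - l * (-w) : ℝ) : EReal)
        = ((p (1 - l) - (1 - l) * w : ℝ) : EReal) + (w : EReal) := by
      rw [← EReal.coe_add, EReal.coe_eq_coe_iff, ← hsym l]
      ring
    rw [h]
    exact add_le_add (le_iSup (fun lam : ℝ => ((p lam - lam * w : ℝ) : EReal)) (1 - l)) le_rfl
end

section
/- Let Ω be a finite nonempty set, H : Ω → ℝ, β > 0, and π : Ω → Ω a bijection with π ∘ π = id. Let μ be the Gibbs probability measure on Ω given by μ({σ}) = exp(−β H(σ)) / Z with Z = Σ_{σ∈Ω} exp(−β H(σ)), and let πμ denote the image (pushforward) of μ under π. Then the Kullback–Leibler divergences satisfy D(πμ ‖ μ) = D(μ ‖ πμ) = β · Σ_{σ∈Ω} μ({σ}) (H(π σ) − H(σ)) ≥ 0, and this quantity is strictly positive if and only if πμ ≠ μ. -/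
open scoped BigOperators

/-- Finite-volume analogue of Proposition 1 of the paper: for the Gibbs measure
`μ({σ}) = exp(−β H(σ))/Z` on a finite set and an involutive bijection `π`, the
Kullback–Leibler divergences between `μ` and its pushforward `πμ` (given by
`πμ({σ}) = μ({π σ})` since `π` is an involution) coincide, equal
`β · Σ_σ μ({σ}) (H(π σ) − H(σ))`, are nonnegative, and are strictly positive
if and only if `πμ ≠ μ`. -/
theorem gibbs_relative_entropy_mean_relative_energy
    {Ω : Type*} [Fintype Ω] [Nonempty Ω]
    (H : Ω → ℝ) (β : ℝ) (hβ : 0 < β)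
    (pi : Ω → Ω) (hbij : Function.Bijective pi) (hinv : pi ∘ pi = id)
    (μ : Ω → ℝ)
    (hμ : ∀ σ, μ σ = Real.exp (-β * H σ) / ∑ τ, Real.exp (-β * H τ)) :
    (∑ σ, μ (pi σ) * Real.log (μ (pi σ) / μ σ) =
        ∑ σ, μ σ * Real.log (μ σ / μ (pi σ))) ∧
    (∑ σ, μ σ * Real.log (μ σ / μ (pi σ)) =
        β * ∑ σ, μ σ * (H (pi σ) - H σ)) ∧
    (0 ≤ β * ∑ σ, μ σ * (H (pi σ) - H σ)) ∧
    (0 < β * ∑ σ, μ σ * (H (pi σ) - H σ) ↔ (fun σ => μ (pi σ)) ≠ μ) := by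
  have hpp : ∀ σ, pi (pi σ) = σ := fun σ => congrFun hinv σ
  have hre : ∀ f : Ω → ℝ, ∑ σ, f (pi σ) = ∑ σ, f σ := fun f =>
    (Equiv.ofBijective pi hbij).sum_comp f
  have hZ : 0 < ∑ τ, Real.exp (-β * H τ) :=
    Finset.sum_pos (fun _ _ => Real.exp_pos _) Finset.univ_nonempty
  have hpos : ∀ σ, 0 < μ σ := fun σ => by
    rw [hμ]; exact div_pos (Real.exp_pos _) hZ
  have hlog : ∀ σ, Real.log (μ σ) = -β * H σ - Real.log (∑ τ, Real.exp (-β * H τ)) := fun σ => by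
    rw [hμ, Real.log_div (Real.exp_pos _).ne' hZ.ne', Real.log_exp]
  have hd : ∀ σ, β * (H (pi σ) - H σ) = Real.log (μ σ) - Real.log (μ (pi σ)) := fun σ => by
    rw [hlog, hlog]; ring
  have hterm : ∀ a b : ℝ, 0 < a → 0 < b → 0 ≤ (a - b) * (Real.log a - Real.log b) := by
    intro a b ha hb
    rcases le_total a b with h | h
    · have := Real.log_le_log ha h
      exact mul_nonneg_of_nonpos_of_nonpos (by linarith) (by linarith)
    · have := Real.log_le_log hb h
      exact mul_nonneg (by linarith) (by linarith)
  have h2 : 2 * (β * ∑ σ, μ σ * (H (pi σ) - H σ)) =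
      ∑ σ, (μ σ - μ (pi σ)) * (Real.log (μ σ) - Real.log (μ (pi σ))) := by
    have e := hre (fun σ => μ σ * (β * (H (pi σ) - H σ)))
    have e1 : β * ∑ σ, μ σ * (H (pi σ) - H σ) = ∑ σ, μ σ * (β * (H (pi σ) - H σ)) := by
      rw [Finset.mul_sum]; exact Finset.sum_congr rfl fun σ _ => by ring
    rw [two_mul, e1]
    nth_rewrite 2 [← e]
    rw [← Finset.sum_add_distrib]
    refine Finset.sum_congr rfl fun σ _ => ?_
    simp only [hpp]
    rw [← hd]; ring
  have hnn : ∀ σ ∈ Finset.univ,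
      0 ≤ (μ σ - μ (pi σ)) * (Real.log (μ σ) - Real.log (μ (pi σ))) :=
    fun σ _ => hterm _ _ (hpos _) (hpos _)
  have h0 := Finset.sum_nonneg hnn
  refine ⟨?_, ?_, by linarith, ?_⟩
  · rw [← hre (fun σ => μ σ * Real.log (μ σ / μ (pi σ)))]
    simp only [hpp]
  · rw [Finset.mul_sum]
    refine Finset.sum_congr rfl fun σ _ => ?_
    rw [Real.log_div (hpos _).ne' (hpos _).ne', ← hd]; ring
  · constructor
    · intro h he
      have : ∀ σ, μ (pi σ) = μ σ := fun σ => congrFun he σ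
      simp only [this, sub_self, zero_mul, Finset.sum_const_zero] at h2
      linarith
    · intro hne
      by_contra hn
      have hz := (Finset.sum_eq_zero_iff_of_nonneg hnn).1 (by linarith)
      apply hne
      funext σ
      rcases mul_eq_zero.1 (hz σ (Finset.mem_univ _)) with h | h
      · linarith
      · exact (Real.log_injOn_pos (hpos σ) (hpos (pi σ)) (by linarith)).symm
end

section
/- Let m ≥ 1 and let f : ℝ^m × ℝ^m → ℝ be twice continuously differentiable and satisfy f(λ, E) = f(2E − λ, E) for all λ, E ∈ ℝ^m. Then for all indices α, γ ∈ {1,…,m}, the mixed second partial derivatives at the origin satisfy ∂²f/∂E_γ ∂λ_α (0,0) = − ∂²f/∂λ_γ ∂λ_α (0,0). -/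
/-- Green–Kubo relation (Section 2.4 of the paper): if `f(λ, E)` is `C²` and satisfies
the fluctuation symmetry `f(λ, E) = f(2E − λ, E)`, then the mixed second partial
derivatives at the origin satisfy
`∂²f/∂E_γ ∂λ_α (0,0) = − ∂²f/∂λ_γ ∂λ_α (0,0)`. Partial derivatives are expressed via
the Fréchet derivative in the coordinate directions `(Pi.single α 1, 0)` (a `λ`
direction) and `(0, Pi.single γ 1)` (an `E` direction). -/
theorem green_kubo_from_fluctuation_symmetry
    (m : ℕ) (hm : 1 ≤ m)
    (f : (Fin m → ℝ) × (Fin m → ℝ) → ℝ)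
    (hf : ContDiff ℝ 2 f)
    (hsym : ∀ lam E : Fin m → ℝ, f (lam, E) = f (fun α => 2 * E α - lam α, E)) :
    ∀ α γ : Fin m,
      fderiv ℝ (fun x : (Fin m → ℝ) × (Fin m → ℝ) =>
          fderiv ℝ f x (Pi.single α 1, 0)) 0 (0, Pi.single γ 1) =
        - fderiv ℝ (fun x : (Fin m → ℝ) × (Fin m → ℝ) =>
            fderiv ℝ f x (Pi.single α 1, 0)) 0 (Pi.single γ 1, 0) := by
  intro α γ
  let L : ((Fin m → ℝ) × (Fin m → ℝ)) →L[ℝ] ((Fin m → ℝ) × (Fin m → ℝ)) :=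
    ((2 : ℝ) • ContinuousLinearMap.snd ℝ (Fin m → ℝ) (Fin m → ℝ)
      - ContinuousLinearMap.fst ℝ (Fin m → ℝ) (Fin m → ℝ)).prod
      (ContinuousLinearMap.snd ℝ (Fin m → ℝ) (Fin m → ℝ))
  have hL : ∀ x, L x = ((2 : ℝ) • x.2 - x.1, x.2) := fun x => rfl
  have hfL : f = fun x => f (L x) := by
    funext x
    exact hsym x.1 x.2
  have hd : Differentiable ℝ f := hf.differentiable (by norm_num)
  have hD : ∀ x v, fderiv ℝ f x v = fderiv ℝ f (L x) (L v) := by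
    intro x v
    have h1 : HasFDerivAt (fun x => f (L x)) ((fderiv ℝ f (L x)).comp L) x :=
      (hd (L x)).hasFDerivAt.comp x L.hasFDerivAt
    rw [← hfL] at h1
    rw [h1.fderiv]
    rfl
  set g : (Fin m → ℝ) × (Fin m → ℝ) → ℝ := fun x => fderiv ℝ f x (Pi.single α 1, 0) with hg
  have hgd : Differentiable ℝ g := by
    have h2 : ContDiff ℝ 1 (fderiv ℝ f) := hf.fderiv_right (by norm_num)
    exact (h2.differentiable (by norm_num)).clm_apply (differentiable_const _)
  have hgL : g = fun x => - g (L x) := by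
    funext x
    simp only [hg]
    rw [hD x, ← map_neg]
    congr 1
    rw [hL]
    simp
  have hG : ∀ v, fderiv ℝ g 0 v = - fderiv ℝ g 0 (L v) := by
    intro v
    have h0 : HasFDerivAt g (fderiv ℝ g 0) (L 0) := by
      rw [map_zero]
      exact (hgd 0).hasFDerivAt
    have h1 : HasFDerivAt (fun x => - g (L x)) (-((fderiv ℝ g 0).comp L)) 0 :=
      (h0.comp 0 L.hasFDerivAt).neg
    rw [← hgL] at h1
    have h3 := congrArg (fun T => T v) h1.fderiv
    exact h3
  have key := hG (0, Pi.single γ 1)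
  have hv : L (0, Pi.single γ 1) =
      (2 : ℝ) • ((Pi.single γ 1, 0) : (Fin m → ℝ) × (Fin m → ℝ)) + (0, Pi.single γ 1) := by
    rw [hL]
    simp
  rw [hv, map_add, map_smul, smul_eq_mul] at key
  linarith
end

section
/- Let m ≥ 1 and let f : ℝ^m × ℝ^m → ℝ be twice continuously differentiable and satisfy f(λ, E) = f(2E − λ, E) for all λ, E ∈ ℝ^m. Then the response matrix M defined by M_{αγ} = ∂²f/∂E_γ ∂λ_α (0,0) is symmetric: M_{αγ} = M_{γα} for all α, γ ∈ {1,…,m}. -/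
/-- Onsager reciprocity (Section 2.4 of the paper): if `f(λ, E)` is `C²` and satisfies
the fluctuation symmetry `f(λ, E) = f(2E − λ, E)`, then the response matrix
`M_{αγ} = ∂²f/∂E_γ ∂λ_α (0,0)` is symmetric. Partial derivatives are expressed via
the Fréchet derivative in the coordinate directions `(Pi.single α 1, 0)` (a `λ`
direction) and `(0, Pi.single γ 1)` (an `E` direction). -/
theorem onsager_reciprocity_from_fluctuation_symmetry
    (m : ℕ) (hm : 1 ≤ m)
    (f : (Fin m → ℝ) × (Fin m → ℝ) → ℝ)
    (hf : ContDiff ℝ 2 f)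
    (hsym : ∀ lam E : Fin m → ℝ, f (lam, E) = f (fun α => 2 * E α - lam α, E))
    (M : Fin m → Fin m → ℝ)
    (hM : ∀ α γ : Fin m,
      M α γ = fderiv ℝ (fun x : (Fin m → ℝ) × (Fin m → ℝ) =>
        fderiv ℝ f x (Pi.single α 1, 0)) 0 (0, Pi.single γ 1)) :
    ∀ α γ : Fin m, M α γ = M γ α := by
  have hd : Differentiable ℝ f := hf.differentiable (by norm_num)
  have hd2 : Differentiable ℝ (fderiv ℝ f) :=
    (hf.fderiv_right (m := 1) (by norm_num)).differentiable (by norm_num)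
  have key : ∀ x u v : (Fin m → ℝ) × (Fin m → ℝ),
      fderiv ℝ (fun x => fderiv ℝ f x v) x u = fderiv ℝ (fderiv ℝ f) x u v := by
    intro x u v
    have h := ((hd2 x).hasFDerivAt.clm_apply (hasFDerivAt_const v x)).fderiv
    rw [h]
    simp
  have hB : ∀ u v, fderiv ℝ (fderiv ℝ f) 0 u v = fderiv ℝ (fderiv ℝ f) 0 v u := by
    intro u v
    exact second_derivative_symmetric (fun y => (hd y).hasFDerivAt) (hd2 0).hasFDerivAt u v
  let L : ((Fin m → ℝ) × (Fin m → ℝ)) →L[ℝ] ((Fin m → ℝ) × (Fin m → ℝ)) :=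
    ContinuousLinearMap.prod
      ((2 : ℝ) • ContinuousLinearMap.snd ℝ _ _ - ContinuousLinearMap.fst ℝ _ _)
      (ContinuousLinearMap.snd ℝ _ _)
  have hL : ∀ a b : Fin m → ℝ, L (a, b) = ((2 : ℝ) • b - a, b) := fun a b => rfl
  have hfL : f = fun x => f (L x) := by
    funext x
    obtain ⟨a, b⟩ := x
    rw [hL, hsym]
    rfl
  have h1 : ∀ x v, fderiv ℝ f x v = fderiv ℝ f (L x) (L v) := by
    intro x v
    have h : HasFDerivAt (fun x => f (L x)) ((fderiv ℝ f (L x)).comp L) x :=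
      (hd (L x)).hasFDerivAt.comp x L.hasFDerivAt
    rw [← hfL] at h
    rw [h.fderiv]
    rfl
  have h2 : ∀ u v, fderiv ℝ (fderiv ℝ f) 0 u v = fderiv ℝ (fderiv ℝ f) 0 (L u) (L v) := by
    intro u v
    rw [← key 0 u v]
    have h : HasFDerivAt (fun x => fderiv ℝ f (L x)) ((fderiv ℝ (fderiv ℝ f) (L 0)).comp L) 0 :=
      (hd2 (L 0)).hasFDerivAt.comp 0 L.hasFDerivAt
    have h' := (h.clm_apply (hasFDerivAt_const (L v) 0)).fderiv
    have e : (fun x => fderiv ℝ f x v) = fun x => fderiv ℝ f (L x) (L v) :=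
      funext fun x => h1 x v
    rw [e, h', map_zero]
    simp
  have h3 : ∀ a b : Fin m → ℝ, fderiv ℝ (fderiv ℝ f) 0 (0, b) (a, 0)
      = - fderiv ℝ (fderiv ℝ f) 0 (b, 0) (a, 0) := by
    intro a b
    have h := h2 (0, b) (a, 0)
    have e1 : L (0, b) = (2 : ℝ) • (b, 0) + (0, b) := by rw [hL]; simp
    have e2 : L (a, 0) = -(a, 0) := by rw [hL]; simp
    rw [e1, e2, map_neg, map_add, map_smul] at h
    simp only [ContinuousLinearMap.add_apply, ContinuousLinearMap.smul_apply, smul_eq_mul] at h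
    linarith
  intro α γ
  rw [hM, hM, key, key, h3, h3, hB]
end

section
/- Let μ be a probability measure on a measurable space Ω, let S, G : Ω → ℝ be bounded measurable functions, and let λ ∈ ℝ. If ∫ exp(−λ(S+G)) dμ = ∫ exp(−(1−λ)(S+G)) dμ, then |ln ∫ exp(−λ S) dμ − ln ∫ exp(−(1−λ) S) dμ| ≤ (|λ| + |1−λ|) · sup_{ω∈Ω} |G(ω)|. -/
open MeasureTheory Real

theorem aux_int {Ω : Type*} [MeasurableSpace Ω] (μ : Measure Ω) [IsProbabilityMeasure μ]
    (F : Ω → ℝ) (hF : Measurable F) (C : ℝ) (hC : ∀ ω, |F ω| ≤ C) :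
    Integrable (fun ω => Real.exp (F ω)) μ := by
  refine Integrable.of_bound (C := Real.exp C) (Real.measurable_exp.comp hF).aestronglyMeasurable ?_
  filter_upwards with ω
  rw [Real.norm_eq_abs, Real.abs_exp]
  exact Real.exp_le_exp.2 ((le_abs_self _).trans (hC ω))

theorem aux_log {Ω : Type*} [MeasurableSpace Ω] (μ : Measure Ω) [IsProbabilityMeasure μ]
    (F H : Ω → ℝ) (hF : Integrable (fun ω => Real.exp (F ω)) μ)
    (hH : Integrable (fun ω => Real.exp (H ω)) μ) (K : ℝ) (hK : ∀ ω, |F ω - H ω| ≤ K) :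
    Real.log (∫ ω, Real.exp (F ω) ∂μ) ≤ K + Real.log (∫ ω, Real.exp (H ω) ∂μ) := by
  have h1 : 0 < ∫ ω, Real.exp (F ω) ∂μ := integral_exp_pos hF
  have h2 : 0 < ∫ ω, Real.exp (H ω) ∂μ := integral_exp_pos hH
  have h3 : ∫ ω, Real.exp (F ω) ∂μ ≤ Real.exp K * ∫ ω, Real.exp (H ω) ∂μ := by
    rw [← integral_const_mul]
    refine integral_mono hF (hH.const_mul _) fun ω => ?_
    simp only [← Real.exp_add]
    apply Real.exp_le_exp.2
    linarith [(abs_le.1 (hK ω)).2]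
  calc _ ≤ Real.log (Real.exp K * ∫ ω, Real.exp (H ω) ∂μ) := Real.log_le_log h1 h3
    _ = _ := by rw [Real.log_mul (Real.exp_pos K).ne' h2.ne', Real.log_exp]

/-- Quantitative (local) form of the fluctuation symmetry used in Theorem 2 of the
paper: if the exact Gibbsian identity holds for the full relative energy `S + G`,
then the symmetry for `S` alone holds up to an error controlled by the sup-norm of
the boundary correction `G`:
`|ln ∫ exp(−λS) dμ − ln ∫ exp(−(1−λ)S) dμ| ≤ (|λ| + |1−λ|) · sup_ω |G(ω)|`. -/
theorem local_fluctuation_symmetry_with_boundary_term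
    {Ω : Type*} [MeasurableSpace Ω] (μ : Measure Ω) [IsProbabilityMeasure μ]
    (S G : Ω → ℝ) (hSmeas : Measurable S) (hGmeas : Measurable G)
    (hSbdd : ∃ C : ℝ, ∀ ω, |S ω| ≤ C) (hGbdd : ∃ C : ℝ, ∀ ω, |G ω| ≤ C)
    (lam : ℝ)
    (hGibbs : ∫ ω, Real.exp (-lam * (S ω + G ω)) ∂μ =
      ∫ ω, Real.exp (-(1 - lam) * (S ω + G ω)) ∂μ) :
    |Real.log (∫ ω, Real.exp (-lam * S ω) ∂μ) -
        Real.log (∫ ω, Real.exp (-(1 - lam) * S ω) ∂μ)| ≤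
      (|lam| + |1 - lam|) * ⨆ ω, |G ω| := by
  obtain ⟨C, hC⟩ := hSbdd
  obtain ⟨D, hD⟩ := hGbdd
  have hsup : ∀ ω, |G ω| ≤ ⨆ ω, |G ω| := fun ω =>
    le_ciSup (f := fun ω => |G ω|) ⟨D, by rintro _ ⟨ω, rfl⟩; exact hD ω⟩ ω
  have i1 : ∀ a : ℝ, Integrable (fun ω => Real.exp (-a * S ω)) μ := fun a =>
    aux_int μ _ (hSmeas.const_mul _) (|a| * C) fun ω => by
      rw [abs_mul, abs_neg]
      exact mul_le_mul_of_nonneg_left (hC ω) (abs_nonneg a)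
  have i2 : ∀ a : ℝ, Integrable (fun ω => Real.exp (-a * (S ω + G ω))) μ := fun a =>
    aux_int μ _ ((hSmeas.add hGmeas).const_mul _) (|a| * (C + D)) fun ω => by
      rw [abs_mul, abs_neg]
      exact mul_le_mul_of_nonneg_left
        ((abs_add_le _ _).trans (add_le_add (hC ω) (hD ω))) (abs_nonneg a)
  have k : ∀ (a : ℝ) (ω : Ω), |-a * S ω - -a * (S ω + G ω)| ≤ |a| * ⨆ ω, |G ω| := fun a ω => by
    have : -a * S ω - -a * (S ω + G ω) = a * G ω := by ring
    rw [this, abs_mul]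
    exact mul_le_mul_of_nonneg_left (hsup ω) (abs_nonneg a)
  have u := fun a => aux_log μ _ _ (i1 a) (i2 a) _ (k a)
  have v := fun a => aux_log μ _ _ (i2 a) (i1 a) _ (fun ω => (abs_sub_comm _ _).trans_le (k a ω))
  have u1 := u lam
  have u2 := u (1 - lam)
  have v1 := v lam
  have v2 := v (1 - lam)
  rw [hGibbs] at u1 v1
  rw [abs_le]
  constructor <;> linarith
end

section
/- There exists a constant c, depending only on d and M, such that for all integers N ≥ L ≥ 1 and every space-time configuration σ : ℤ^d × ℤ → S, |R_{L,N}(σ) − Σ_{n=−N+1}^{N−1} Σ_{i : max_k |i_k| ≤ L−1} J_{i,n}(σ)| ≤ c · (N+1) · (L+1)^{d−1}. -/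
open scoped BigOperators

/-- The nearest-neighbour index set `B = {j ∈ ℤ^d : max_k |j_k| ≤ 1}`. -/
def Nbhd (d : ℕ) : Type := {j : Fin d → ℤ // ∀ k, |j k| ≤ 1}

/-- The transition weight `p_{i,n}(σ) = p(σ(i,n) | (σ(i+j, n−1))_{j∈B})` of a
translation-invariant nearest-neighbour PCA rule `p` at the space-time point `(i,n)`. -/
def pcaWeight {S : Type} (d : ℕ) (p : S → (Nbhd d → S) → ℝ)
    (σ : (Fin d → ℤ) → ℤ → S) (i : Fin d → ℤ) (n : ℤ) : ℝ :=
  p (σ i n) (fun j => σ (i + j.val) (n - 1))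

/-- The entropy-production current
`J_{i,n}(σ) = ln p(σ(i,n) | (σ(i+j,n−1))_j) − ln p(σ(i,n−1) | (σ(i+j,n))_j)`. -/
noncomputable def pcaCurrent {S : Type} (d : ℕ) (p : S → (Nbhd d → S) → ℝ)
    (σ : (Fin d → ℤ) → ℤ → S) (i : Fin d → ℤ) (n : ℤ) : ℝ :=
  Real.log (p (σ i n) (fun j => σ (i + j.val) (n - 1))) -
    Real.log (p (σ i (n - 1)) (fun j => σ (i + j.val) n))

/-- The time-reversal transformation `π_{L,N}` acting in the space-time window
`{(i,n) : max_k |i_k| ≤ L, |n| ≤ N}`. -/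
def timeRev {S : Type} (d : ℕ) (L N : ℕ) (σ : (Fin d → ℤ) → ℤ → S) :
    (Fin d → ℤ) → ℤ → S :=
  fun i n => if (∀ k, |i k| ≤ (L : ℤ)) ∧ |n| ≤ (N : ℤ) then σ i (-n) else σ i n

/-- The relative energy `R_{L,N}(σ) = Σ_{(i,n)} [ln p_{i,n}(σ) − ln p_{i,n}(π_{L,N}σ)]`,
summed over the finite window `max_k |i_k| ≤ L+1`, `−N ≤ n ≤ N+1` (outside of which the
terms vanish). -/
noncomputable def relEnergy {S : Type} (d : ℕ) (p : S → (Nbhd d → S) → ℝ) (L N : ℕ)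
    (σ : (Fin d → ℤ) → ℤ → S) : ℝ :=
  ∑ i ∈ Fintype.piFinset (fun _ : Fin d => Finset.Icc (-(L : ℤ) - 1) ((L : ℤ) + 1)),
    ∑ n ∈ Finset.Icc (-(N : ℤ)) ((N : ℤ) + 1),
      (Real.log (pcaWeight d p σ i n) - Real.log (pcaWeight d p (timeRev d L N σ) i n))

theorem aux_pow (a b : ℝ) (hb : 0 ≤ b) (hab : b ≤ a) (e : ℕ) :
    a ^ (e + 1) - b ^ (e + 1) ≤ ((e : ℝ) + 1) * (a - b) * a ^ e := by
  induction e with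
  | zero => simp
  | succ k ih =>
    have h1 : b ^ (k + 1) ≤ a ^ (k + 1) := pow_le_pow_left₀ hb hab _
    have h2 := mul_le_mul_of_nonneg_left ih (hb.trans hab)
    have h3 := mul_le_mul_of_nonneg_left h1 (sub_nonneg.2 hab)
    have e1 : a ^ (k + 1 + 1) - b ^ (k + 1 + 1)
      = a * (a ^ (k + 1) - b ^ (k + 1)) + (a - b) * b ^ (k + 1) := by ring
    have e2 : (((k + 1 : ℕ) : ℝ) + 1) * (a - b) * a ^ (k + 1)
      = a * (((k : ℝ) + 1) * (a - b) * a ^ k) + (a - b) * a ^ (k + 1) := by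
      push_cast; ring
    rw [e1, e2]; linarith

theorem aux_weight {S : Type} (d : ℕ) (p : S → (Nbhd d → S) → ℝ) (L N : ℕ)
    (σ : (Fin d → ℤ) → ℤ → S) (i : Fin d → ℤ) (hi : ∀ k, |i k| ≤ (L : ℤ) - 1)
    (n : ℤ) (h1 : -(N : ℤ) + 1 ≤ n) (h2 : n ≤ N) :
    pcaWeight d p (timeRev d L N σ) i n
      = p (σ i ((1 - n) - 1)) (fun j => σ (i + j.val) (1 - n)) := by
  unfold pcaWeight timeRev
  have hN : |n| ≤ (N : ℤ) := abs_le.2 ⟨by omega, h2⟩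
  have hN' : |n - 1| ≤ (N : ℤ) := abs_le.2 ⟨by omega, by omega⟩
  have hi' : ∀ k, |i k| ≤ (L : ℤ) := fun k => by have := hi k; omega
  have hj : ∀ j : Nbhd d, ∀ k, |(i + j.val) k| ≤ (L : ℤ) := fun j k => by
    have a1 := hi k
    have a2 := j.2 k
    have a3 := abs_add_le (i k) (j.val k)
    simp only [Pi.add_apply]
    omega
  rw [if_pos ⟨hi', hN⟩]
  congr 1
  · congr 1; ring
  · funext j
    rw [if_pos ⟨hj j, hN'⟩]
    congr 1; ring

theorem aux_inner {S : Type} (d : ℕ) (p : S → (Nbhd d → S) → ℝ) (M : ℝ)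
    (hM : ∀ a η, |Real.log (p a η)| ≤ M) (L N : ℕ) (hN : 1 ≤ N)
    (σ : (Fin d → ℤ) → ℤ → S) (i : Fin d → ℤ) (hi : ∀ k, |i k| ≤ (L : ℤ) - 1) :
    |∑ n ∈ Finset.Icc (-(N : ℤ)) ((N : ℤ) + 1),
      (Real.log (pcaWeight d p σ i n) - Real.log (pcaWeight d p (timeRev d L N σ) i n))
      - ∑ n ∈ Finset.Icc (-(N : ℤ) + 1) ((N : ℤ) - 1), pcaCurrent d p σ i n| ≤ 6 * M := by
  have s1 : Finset.Icc (-(N : ℤ)) ((N : ℤ) + 1)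
      = insert (-(N : ℤ)) (insert ((N : ℤ) + 1) (Finset.Icc (-(N : ℤ) + 1) (N : ℤ))) := by
    ext x; simp only [Finset.mem_insert, Finset.mem_Icc]; omega
  have s2 : Finset.Icc (-(N : ℤ) + 1) (N : ℤ)
      = insert (N : ℤ) (Finset.Icc (-(N : ℤ) + 1) ((N : ℤ) - 1)) := by
    ext x; simp only [Finset.mem_insert, Finset.mem_Icc]; omega
  have key : ∑ n ∈ Finset.Icc (-(N : ℤ) + 1) (N : ℤ),
      (Real.log (pcaWeight d p σ i n) - Real.log (pcaWeight d p (timeRev d L N σ) i n))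
      = ∑ n ∈ Finset.Icc (-(N : ℤ) + 1) (N : ℤ), pcaCurrent d p σ i n := by
    unfold pcaCurrent
    rw [Finset.sum_sub_distrib, Finset.sum_sub_distrib]
    congr 1
    refine Finset.sum_bij' (fun n _ => 1 - n) (fun n _ => 1 - n) ?_ ?_ ?_ ?_ ?_
    · intro n hn; simp only [Finset.mem_Icc] at *; omega
    · intro n hn; simp only [Finset.mem_Icc] at *; omega
    · intro n hn; ring
    · intro n hn; ring
    · intro n hn
      rw [Finset.mem_Icc] at hn
      rw [aux_weight d p L N σ i hi n hn.1 hn.2]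
  rw [s1, Finset.sum_insert (by simp only [Finset.mem_insert, Finset.mem_Icc]; omega),
    Finset.sum_insert (by simp only [Finset.mem_Icc]; omega), key, s2,
    Finset.sum_insert (by simp only [Finset.mem_Icc]; omega)]
  unfold pcaCurrent pcaWeight
  have hM' : ∀ a η, -M ≤ Real.log (p a η) ∧ Real.log (p a η) ≤ M := fun a η => abs_le.1 (hM a η)
  have b1 := hM' (σ i (-(N : ℤ))) (fun j => σ (i + j.val) (-(N : ℤ) - 1))
  have b2 := hM' (timeRev d L N σ i (-(N : ℤ))) (fun j => timeRev d L N σ (i + j.val) (-(N : ℤ) - 1))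
  have b3 := hM' (σ i ((N : ℤ) + 1)) (fun j => σ (i + j.val) ((N : ℤ) + 1 - 1))
  have b4 := hM' (timeRev d L N σ i ((N : ℤ) + 1))
    (fun j => timeRev d L N σ (i + j.val) ((N : ℤ) + 1 - 1))
  have b5 := hM' (σ i (N : ℤ)) (fun j => σ (i + j.val) ((N : ℤ) - 1))
  have b6 := hM' (σ i ((N : ℤ) - 1)) (fun j => σ (i + j.val) (N : ℤ))
  rw [abs_le]
  constructor <;> linarith [b1.1, b1.2, b2.1, b2.2, b3.1, b3.2, b4.1, b4.2, b5.1, b5.2, b6.1, b6.2]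

/-- Equations (es1)–(es2) of the paper, the key estimate in the proof of Theorem 2
(fluctuation theorem for PCA): there is a constant `c`, depending only on `d` and
`M = max |ln p(a|η)|`, such that for all `N ≥ L ≥ 1` and every space-time configuration
`σ`, the relative energy `R_{L,N}(σ)` differs from the bulk sum of the
entropy-production currents `Σ_{n=−N+1}^{N−1} Σ_{max_k |i_k| ≤ L−1} J_{i,n}(σ)` by at
most `c (N+1)(L+1)^{d−1}`. -/
theorem pca_relative_energy_current_decomposition (d : ℕ) (hd : 1 ≤ d) (M : ℝ) :
    ∃ c : ℝ, ∀ (S : Type) [Fintype S] [Nonempty S]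
      (p : S → (Nbhd d → S) → ℝ),
      (∀ a η, 0 < p a η) → (∀ η, ∑ a, p a η = 1) →
      (∀ a η, |Real.log (p a η)| ≤ M) →
      ∀ (L N : ℕ), 1 ≤ L → L ≤ N →
      ∀ σ : (Fin d → ℤ) → ℤ → S,
        |relEnergy d p L N σ -
            ∑ n ∈ Finset.Icc (-(N : ℤ) + 1) ((N : ℤ) - 1),
              ∑ i ∈ Fintype.piFinset
                  (fun _ : Fin d => Finset.Icc (-(L : ℤ) + 1) ((L : ℤ) - 1)),
                pcaCurrent d p σ i n| ≤
          c * ((N : ℝ) + 1) * ((L : ℝ) + 1) ^ (d - 1) := by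
  obtain ⟨e, rfl⟩ : ∃ e, d = e + 1 := ⟨d - 1, by omega⟩
  refine ⟨6 * M * 2 ^ (e + 1) + 16 * M * ((e : ℝ) + 1) * 3 ^ e, ?_⟩
  intro S _ _ p _ _ hM L N hL hLN σ
  have hM0 : 0 ≤ M := (abs_nonneg _).trans (hM (Classical.arbitrary S) (fun _ => Classical.arbitrary S))
  unfold relEnergy
  rw [Finset.sum_comm (s := Finset.Icc (-(N : ℤ) + 1) ((N : ℤ) - 1))]
  set O := Fintype.piFinset (fun _ : Fin (e + 1) => Finset.Icc (-(L : ℤ) - 1) ((L : ℤ) + 1)) with hO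
  set I := Fintype.piFinset (fun _ : Fin (e + 1) => Finset.Icc (-(L : ℤ) + 1) ((L : ℤ) - 1)) with hI
  have hsub : I ⊆ O := Fintype.piFinset_subset _ _ fun _ => Finset.Icc_subset_Icc (by omega) (by omega)
  have cO : (O.card : ℝ) = (2 * (L : ℝ) + 3) ^ (e + 1) := by
    have : O.card = (2 * L + 3) ^ (e + 1) := by
      rw [hO, Fintype.card_piFinset_const, Int.card_Icc]
      congr 1; omega
    rw [this]; push_cast; rfl
  have cI : (I.card : ℝ) = (2 * (L : ℝ) - 1) ^ (e + 1) := by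
    have : I.card = (2 * L - 1) ^ (e + 1) := by
      rw [hI, Fintype.card_piFinset_const, Int.card_Icc]
      congr 1; omega
    rw [this, Nat.cast_pow, Nat.cast_sub (by omega)]; push_cast; rfl
  have cD : ((O \ I).card : ℝ) = (2 * (L : ℝ) + 3) ^ (e + 1) - (2 * (L : ℝ) - 1) ^ (e + 1) := by
    rw [Finset.card_sdiff_of_subset hsub, Nat.cast_sub (Finset.card_le_card hsub), cO, cI]
  rw [← Finset.sum_sdiff hsub, add_sub_assoc, ← Finset.sum_sub_distrib]
  have hL1 : (1 : ℝ) ≤ L := by exact_mod_cast hL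
  have hLN' : (L : ℝ) ≤ N := by exact_mod_cast hLN
  have hA := (Finset.abs_sum_le_sum_abs (fun i => ∑ n ∈ Finset.Icc (-(N : ℤ)) ((N : ℤ) + 1),
      (Real.log (pcaWeight (e + 1) p σ i n)
        - Real.log (pcaWeight (e + 1) p (timeRev (e + 1) L N σ) i n))) (O \ I)).trans
    (Finset.sum_le_card_nsmul _ _ ((2 * (N : ℝ) + 2) * (2 * M)) (fun i _ => by
      refine (Finset.abs_sum_le_sum_abs _ _).trans ?_
      refine (Finset.sum_le_card_nsmul _ _ (2 * M) (fun n _ => ?_)).trans ?_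
      · refine (abs_sub _ _).trans ?_
        unfold pcaWeight
        linarith [hM (σ i n) (fun j => σ (i + j.val) (n - 1)),
          hM (timeRev (e + 1) L N σ i n) (fun j => timeRev (e + 1) L N σ (i + j.val) (n - 1))]
      · have : (Finset.Icc (-(N : ℤ)) ((N : ℤ) + 1)).card = 2 * N + 2 := by
          rw [Int.card_Icc]; omega
        rw [this, nsmul_eq_mul]; push_cast; exact le_rfl))
  have hB := (Finset.abs_sum_le_sum_abs (fun i => ∑ n ∈ Finset.Icc (-(N : ℤ)) ((N : ℤ) + 1),
      (Real.log (pcaWeight (e + 1) p σ i n)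
        - Real.log (pcaWeight (e + 1) p (timeRev (e + 1) L N σ) i n))
      - ∑ n ∈ Finset.Icc (-(N : ℤ) + 1) ((N : ℤ) - 1), pcaCurrent (e + 1) p σ i n) I).trans
    (Finset.sum_le_card_nsmul _ _ (6 * M) (fun i hi => by
      refine aux_inner (e + 1) p M hM L N (by omega) σ i (fun k => ?_)
      rw [hI, Fintype.mem_piFinset] at hi
      have := Finset.mem_Icc.1 (hi k)
      exact abs_le.2 ⟨by omega, by omega⟩))
  rw [nsmul_eq_mul, cD] at hA
  rw [nsmul_eq_mul, cI] at hB
  refine (abs_add_le _ _).trans ((add_le_add hA hB).trans ?_)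
  have h1 := aux_pow (2 * (L : ℝ) + 3) (2 * (L : ℝ) - 1) (by linarith) (by linarith) e
  have h2 : (2 * (L : ℝ) + 3) ^ e ≤ 3 ^ e * ((L : ℝ) + 1) ^ e := by
    rw [← mul_pow]; exact pow_le_pow_left₀ (by linarith) (by linarith) _
  have h3 : (2 * (L : ℝ) - 1) ^ (e + 1) ≤ 2 ^ (e + 1) * (((N : ℝ) + 1) * ((L : ℝ) + 1) ^ e) := by
    calc (2 * (L : ℝ) - 1) ^ (e + 1) ≤ (2 * ((L : ℝ) + 1)) ^ (e + 1) :=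
          pow_le_pow_left₀ (by linarith) (by linarith) _
      _ = 2 ^ (e + 1) * (((L : ℝ) + 1) * ((L : ℝ) + 1) ^ e) := by rw [mul_pow]; ring
      _ ≤ _ := by gcongr
  have h4 : (2 * (L : ℝ) + 3) ^ (e + 1) - (2 * (L : ℝ) - 1) ^ (e + 1)
      ≤ 4 * ((e : ℝ) + 1) * (3 ^ e * ((L : ℝ) + 1) ^ e) := by
    refine h1.trans ?_
    have : ((e : ℝ) + 1) * (2 * (L : ℝ) + 3 - (2 * (L : ℝ) - 1)) = 4 * ((e : ℝ) + 1) := by ring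
    rw [this]
    exact mul_le_mul_of_nonneg_left h2 (by positivity)
  have h5 := mul_le_mul_of_nonneg_right h4 (show 0 ≤ (2 * (N : ℝ) + 2) * (2 * M) by positivity)
  have h6 := mul_le_mul_of_nonneg_right h3 (show 0 ≤ 6 * M by positivity)
  refine (add_le_add h5 h6).trans (le_of_eq ?_)
  rw [Nat.add_sub_cancel]
  ring
end

section
/- For an integer N ≥ 1, let P_N be the probability measure on S^{N+1} given by P_N(x_0,…,x_N) = ρ(x_0) · Π_{k=0}^{N−1} p(x_{k+1}|x_k), and define W_N(x_0,…,x_N) = ln ρ(x_0) − ln ρ(x_N) + Σ_{k=0}^{N−1} [ln p(x_{k+1}|x_k) − ln p(x_k|x_{k+1})]. Then for every λ ∈ ℝ, Σ_{x ∈ S^{N+1}} P_N(x) exp(−λ W_N(x)) = Σ_{x ∈ S^{N+1}} P_N(x) exp(−(1−λ) W_N(x)). -/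
open scoped BigOperators

/-- Exact finite-time Kurchan/Lebowitz–Spohn fluctuation symmetry for a stationary
finite-state Markov chain: with path measure
`P_N(x) = ρ(x_0) Π_{k<N} p(x_{k+1}|x_k)` and
`W_N(x) = ln ρ(x_0) − ln ρ(x_N) + Σ_{k<N} [ln p(x_{k+1}|x_k) − ln p(x_k|x_{k+1})]`,
one has `Σ_x P_N(x) e^{−λ W_N(x)} = Σ_x P_N(x) e^{−(1−λ) W_N(x)}` for every `λ`.
Here `p a b` denotes the transition probability `p(a|b)`. -/
theorem markov_chain_path_fluctuation_symmetry
    {S : Type*} [Fintype S] [Nonempty S] [DecidableEq S]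
    (p : S → S → ℝ) (hp : ∀ a b, 0 < p a b) (hpsum : ∀ b, ∑ a, p a b = 1)
    (ρ : S → ℝ) (hρ : ∀ b, 0 < ρ b) (hρsum : ∑ b, ρ b = 1)
    (hstat : ∀ a, ∑ b, p a b * ρ b = ρ a)
    (N : ℕ) (hN : 1 ≤ N)
    (P : (Fin (N + 1) → S) → ℝ)
    (hP : ∀ x, P x = ρ (x 0) * ∏ k : Fin N, p (x k.succ) (x k.castSucc))
    (W : (Fin (N + 1) → S) → ℝ)
    (hW : ∀ x, W x = Real.log (ρ (x 0)) - Real.log (ρ (x (Fin.last N))) +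
      ∑ k : Fin N,
        (Real.log (p (x k.succ) (x k.castSucc)) -
          Real.log (p (x k.castSucc) (x k.succ)))) :
    ∀ lam : ℝ,
      ∑ x : Fin (N + 1) → S, P x * Real.exp (-lam * W x) =
        ∑ x : Fin (N + 1) → S, P x * Real.exp (-(1 - lam) * W x) := by
  intro lam
  let L : (Fin (N + 1) → S) → ℝ := fun x =>
    Real.log (ρ (x 0)) + ∑ k : Fin N, Real.log (p (x k.succ) (x k.castSucc))
  let e : (Fin (N + 1) → S) ≃ (Fin (N + 1) → S) := Equiv.arrowCongr Fin.revPerm (Equiv.refl S)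
  have he : ∀ x i, e x i = x (Fin.rev i) := fun x i => rfl
  have hee : ∀ x, e (e x) = x := by
    intro x
    funext i
    rw [he, he, Fin.rev_rev]
  have hPL : ∀ x, P x = Real.exp (L x) := by
    intro x
    simp only [L]
    rw [hP, Real.exp_add, Real.exp_log (hρ _), Real.exp_sum]
    simp only [Real.exp_log (hp _ _)]
  have hLr : ∀ x, L (e x) = Real.log (ρ (x (Fin.last N))) +
      ∑ k : Fin N, Real.log (p (x k.castSucc) (x k.succ)) := by
    intro x
    simp only [L, he, Fin.rev_zero, Fin.rev_succ, Fin.rev_castSucc]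
    congr 1
    exact Equiv.sum_comp Fin.revPerm
      (fun k : Fin N => Real.log (p (x k.castSucc) (x k.succ)))
  have hWL : ∀ x, W x = L x - L (e x) := by
    intro x
    rw [hW, hLr, Finset.sum_sub_distrib]
    simp only [L]
    ring
  rw [← Equiv.sum_comp e]
  refine Finset.sum_congr rfl fun x _ => ?_
  rw [hPL, hPL, hWL, hWL, hee, ← Real.exp_add, ← Real.exp_add]
  congr 1
  ring
end

section
/- For an integer N ≥ 1, let P_N be the probability measure on S^{N+1} given by P_N(x_0,…,x_N) = ρ(x_0) · Π_{k=0}^{N−1} p(x_{k+1}|x_k), and define the action functional W̃_N(x_0,…,x_N) = Σ_{k=0}^{N−1} [ln p(x_{k+1}|x_k) − ln p(x_k|x_{k+1})]. Then for every λ ∈ ℝ and every N ≥ 1, |ln Σ_x P_N(x) exp(−λ W̃_N(x)) − ln Σ_x P_N(x) exp(−(1−λ) W̃_N(x))| ≤ 2 (|λ| + |1−λ|) · max_{b∈S} |ln ρ(b)|, a bound uniform in N. -/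
open scoped BigOperators

theorem fluct_aux {S : Type*} [Fintype S] [Nonempty S]
    (p : S → S → ℝ) (hp : ∀ a b, 0 < p a b) (ρ : S → ℝ) (hρ : ∀ b, 0 < ρ b)
    (N : ℕ) (lam : ℝ) (M : ℝ) (hM : ∀ b, |Real.log (ρ b)| ≤ M) :
    Real.log (∑ x : Fin (N + 1) → S,
            (ρ (x 0) * ∏ k : Fin N, p (x k.succ) (x k.castSucc)) *
              Real.exp (-lam * ∑ k : Fin N,
                (Real.log (p (x k.succ) (x k.castSucc)) -
                  Real.log (p (x k.castSucc) (x k.succ))))) ≤ 2 * M +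
          Real.log (∑ x : Fin (N + 1) → S,
            (ρ (x 0) * ∏ k : Fin N, p (x k.succ) (x k.castSucc)) *
              Real.exp (-(1 - lam) * ∑ k : Fin N,
                (Real.log (p (x k.succ) (x k.castSucc)) -
                  Real.log (p (x k.castSucc) (x k.succ))))) := by
  have key : ∀ (l : ℝ) (x : Fin (N + 1) → S),
      (ρ (x 0) * ∏ k : Fin N, p (x k.succ) (x k.castSucc)) *
              Real.exp (-l * ∑ k : Fin N,
                (Real.log (p (x k.succ) (x k.castSucc)) -
                  Real.log (p (x k.castSucc) (x k.succ)))) =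
      Real.exp (Real.log (ρ (x 0)) + (1 - l) * (∑ k : Fin N, Real.log (p (x k.succ) (x k.castSucc)))
        + l * ∑ k : Fin N, Real.log (p (x k.castSucc) (x k.succ))) := by
    intro l x
    have h1 : ∏ k : Fin N, p (x k.succ) (x k.castSucc) =
        Real.exp (∑ k : Fin N, Real.log (p (x k.succ) (x k.castSucc))) := by
      rw [Real.exp_sum]
      exact Finset.prod_congr rfl fun k _ => (Real.exp_log (hp _ _)).symm
    rw [h1, Finset.sum_sub_distrib]
    conv_lhs => rw [← Real.exp_log (hρ (x 0))]
    rw [← Real.exp_add, ← Real.exp_add]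
    congr 1
    ring
  simp only [key]
  rw [← Real.log_exp (2 * M), ← Real.log_mul (Real.exp_pos _).ne'
    (Finset.sum_pos (fun _ _ => Real.exp_pos _) Finset.univ_nonempty).ne']
  apply Real.log_le_log (Finset.sum_pos (fun _ _ => Real.exp_pos _) Finset.univ_nonempty)
  rw [← (Equiv.arrowCongr (Fin.revPerm (n := N + 1)) (Equiv.refl S)).sum_comp, Finset.mul_sum]
  refine Finset.sum_le_sum fun x _ => ?_
  rw [← Real.exp_add, Real.exp_le_exp]
  have e1 : ∑ k : Fin N, Real.log (p (x (Fin.rev k.succ)) (x (Fin.rev k.castSucc))) =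
      ∑ k : Fin N, Real.log (p (x k.castSucc) (x k.succ)) := by
    rw [← Equiv.sum_comp (Fin.revPerm (n := N))]
    simp [Fin.rev_succ, Fin.rev_castSucc]
  have e2 : ∑ k : Fin N, Real.log (p (x (Fin.rev k.castSucc)) (x (Fin.rev k.succ))) =
      ∑ k : Fin N, Real.log (p (x k.succ) (x k.castSucc)) := by
    rw [← Equiv.sum_comp (Fin.revPerm (n := N))]
    simp [Fin.rev_succ, Fin.rev_castSucc]
  simp only [Equiv.arrowCongr_apply, Function.comp_apply, Equiv.refl_apply, Fin.revPerm_symm,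
    Fin.revPerm_apply, e1, e2]
  have a1 := abs_le.1 (hM (x (Fin.rev 0)))
  have a2 := abs_le.1 (hM (x 0))
  linarith [a1.1, a1.2, a2.1, a2.2]

/-- Asymptotic fluctuation symmetry for the Lebowitz–Spohn action functional of a
stationary finite-state Markov chain: with path measure
`P_N(x) = ρ(x_0) Π_{k<N} p(x_{k+1}|x_k)` and action
`W̃_N(x) = Σ_{k<N} [ln p(x_{k+1}|x_k) − ln p(x_k|x_{k+1})]`, for every `λ` and every
`N ≥ 1`,
`|ln Σ_x P_N(x) e^{−λ W̃_N(x)} − ln Σ_x P_N(x) e^{−(1−λ) W̃_N(x)}| ≤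
  2(|λ| + |1−λ|) · max_b |ln ρ(b)|`, a bound uniform in `N`.
Here `p a b` denotes the transition probability `p(a|b)`. -/
theorem markov_chain_action_functional_fluctuation_bound
    {S : Type*} [Fintype S] [Nonempty S] [DecidableEq S]
    (p : S → S → ℝ) (hp : ∀ a b, 0 < p a b) (hpsum : ∀ b, ∑ a, p a b = 1)
    (ρ : S → ℝ) (hρ : ∀ b, 0 < ρ b) (hρsum : ∑ b, ρ b = 1)
    (hstat : ∀ a, ∑ b, p a b * ρ b = ρ a) :
    ∀ (N : ℕ), 1 ≤ N → ∀ lam : ℝ,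
      |Real.log (∑ x : Fin (N + 1) → S,
            (ρ (x 0) * ∏ k : Fin N, p (x k.succ) (x k.castSucc)) *
              Real.exp (-lam * ∑ k : Fin N,
                (Real.log (p (x k.succ) (x k.castSucc)) -
                  Real.log (p (x k.castSucc) (x k.succ))))) -
          Real.log (∑ x : Fin (N + 1) → S,
            (ρ (x 0) * ∏ k : Fin N, p (x k.succ) (x k.castSucc)) *
              Real.exp (-(1 - lam) * ∑ k : Fin N,
                (Real.log (p (x k.succ) (x k.castSucc)) -
                  Real.log (p (x k.castSucc) (x k.succ)))))| ≤
        2 * (|lam| + |1 - lam|) * ⨆ b : S, |Real.log (ρ b)| := by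
  intro N _ lam
  have hM : ∀ b, |Real.log (ρ b)| ≤ ⨆ b : S, |Real.log (ρ b)| := fun b =>
    le_ciSup (f := fun b => |Real.log (ρ b)|) (Set.finite_range _).bddAbove b
  have h1 := fluct_aux p hp ρ hρ N lam _ hM
  have h2 := fluct_aux p hp ρ hρ N (1 - lam) _ hM
  rw [sub_sub_cancel] at h2
  have hM0 : 0 ≤ ⨆ b : S, |Real.log (ρ b)| :=
    (abs_nonneg _).trans (hM (Classical.arbitrary S))
  have h3 : 1 ≤ |lam| + |1 - lam| := by
    linarith [le_abs_self lam, le_abs_self (1 - lam)]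
  have h4 := mul_le_mul_of_nonneg_right h3 hM0
  rw [abs_le]
  constructor <;> linarith
end

section
/- For an integer N ≥ 1, let P_N be the probability measure on S^{N+1} given by P_N(x_0,…,x_N) = ρ(x_0) · Π_{k=0}^{N−1} p(x_{k+1}|x_k), and let Q_N be the image of P_N under the path-reversal map (x_0,…,x_N) ↦ (x_N,…,x_0). Then the Kullback–Leibler divergence satisfies D(P_N ‖ Q_N) = N · Σ_{b∈S} ρ(b) Σ_{a∈S} p(a|b) [ln p(a|b) − ln p(b|a)]. -/
open scoped BigOperators

lemma aux_sum_snoc {S : Type*} [Fintype S] (N : ℕ) (F : (Fin (N + 2) → S) → ℝ) :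
    ∑ x, F x = ∑ y : Fin (N + 1) → S, ∑ a : S,
      F (Fin.snoc (α := fun _ => S) y a) := by
  rw [← (Fin.snocEquiv (fun _ : Fin (N + 2) => S)).sum_comp, Fintype.sum_prod_type,
    Finset.sum_comm]
  rfl

/-- path weight -/
def auxW {S : Type*} (p : S → S → ℝ) (ρ : S → ℝ) (N : ℕ) (x : Fin (N + 1) → S) : ℝ :=
  ρ (x 0) * ∏ k : Fin N, p (x k.succ) (x k.castSucc)

lemma aux_snoc_zero {S : Type*} (N : ℕ) (y : Fin (N + 1) → S) (a : S) :
    Fin.snoc (α := fun _ => S) y a 0 = y 0 :=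
  Fin.snoc_castSucc (α := fun _ : Fin (N + 2) => S) a y 0

lemma aux_snoc_succ {S : Type*} (N : ℕ) (y : Fin (N + 1) → S) (a : S) (k : Fin N) :
    Fin.snoc (α := fun _ => S) y a k.castSucc.succ = y k.succ := by
  rw [Fin.succ_castSucc]
  exact Fin.snoc_castSucc (α := fun _ : Fin (N + 2) => S) a y k.succ

lemma aux_W_snoc {S : Type*} (p : S → S → ℝ) (ρ : S → ℝ) (N : ℕ) (y : Fin (N + 1) → S) (a : S) :
    auxW p ρ (N + 1) (Fin.snoc (α := fun _ => S) y a) =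
      auxW p ρ N y * p a (y (Fin.last N)) := by
  unfold auxW
  rw [Fin.prod_univ_castSucc, aux_snoc_zero]
  simp only [aux_snoc_succ, Fin.snoc_castSucc, Fin.succ_last, Fin.snoc_last]
  ring

lemma aux_last {S : Type*} [Fintype S] (p : S → S → ℝ) (ρ : S → ℝ)
    (hstat : ∀ a, ∑ b, p a b * ρ b = ρ a) (N : ℕ) : ∀ f : S → ℝ,
    ∑ x, auxW p ρ N x * f (x (Fin.last N)) = ∑ b, ρ b * f b := by
  induction N with
  | zero =>
    intro f
    rw [← (Equiv.funUnique (Fin 1) S).symm.sum_comp]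
    simp [auxW]
  | succ N ih =>
    intro f
    rw [aux_sum_snoc]
    simp only [aux_W_snoc, Fin.snoc_last, mul_assoc]
    simp only [← Finset.mul_sum]
    rw [ih (fun b => ∑ a, p a b * f a)]
    simp only [Finset.mul_sum]
    rw [Finset.sum_comm]
    refine Finset.sum_congr rfl fun a _ => ?_
    rw [← hstat a, Finset.sum_mul]
    exact Finset.sum_congr rfl fun b _ => by ring

lemma aux_first {S : Type*} [Fintype S] (p : S → S → ℝ) (ρ : S → ℝ)
    (hpsum : ∀ b, ∑ a, p a b = 1) (f : S → ℝ) (N : ℕ) :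
    ∑ x, auxW p ρ N x * f (x 0) = ∑ b, ρ b * f b := by
  induction N with
  | zero =>
    rw [← (Equiv.funUnique (Fin 1) S).symm.sum_comp]
    simp [auxW]
  | succ N ih =>
    rw [aux_sum_snoc, ← ih]
    refine Finset.sum_congr rfl fun y _ => ?_
    simp only [aux_W_snoc, aux_snoc_zero]
    rw [← Finset.sum_mul, ← Finset.mul_sum, hpsum, mul_one]

lemma aux_add {S : Type*} [Fintype S] (p : S → S → ℝ) (ρ : S → ℝ)
    (hpsum : ∀ b, ∑ a, p a b = 1)
    (hstat : ∀ a, ∑ b, p a b * ρ b = ρ a) (g : S → S → ℝ) (N : ℕ) :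
    ∑ x, auxW p ρ N x * ∑ k : Fin N, g (x k.succ) (x k.castSucc) =
      (N : ℝ) * ∑ b, ρ b * ∑ a, p a b * g a b := by
  induction N with
  | zero => simp
  | succ N ih =>
    rw [aux_sum_snoc]
    push_cast
    rw [add_mul, one_mul, ← ih, ← aux_last p ρ hstat N (fun b => ∑ a, p a b * g a b),
      ← Finset.sum_add_distrib]
    refine Finset.sum_congr rfl fun y _ => ?_
    simp only [aux_W_snoc, Fin.sum_univ_castSucc (n := N), aux_snoc_succ, Fin.snoc_castSucc,
      Fin.succ_last, Fin.snoc_last, mul_add, Finset.sum_add_distrib]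
    congr 1
    · rw [← Finset.sum_mul, ← Finset.mul_sum, hpsum, mul_one]
    · rw [Finset.mul_sum]
      exact Finset.sum_congr rfl fun b _ => by ring

lemma aux_rev {S : Type*} (p : S → S → ℝ) (ρ : S → ℝ) (N : ℕ) (x : Fin (N + 1) → S) :
    auxW p ρ N (fun k => x k.rev) =
      ρ (x (Fin.last N)) * ∏ k : Fin N, p (x k.castSucc) (x k.succ) := by
  unfold auxW
  rw [← Equiv.prod_comp Fin.revPerm (fun k : Fin N => p (x k.castSucc) (x k.succ))]
  simp [Fin.rev_succ, Fin.rev_castSucc]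

/-- Entropy production of a stationary finite-state Markov chain as a relative entropy
density: the Kullback–Leibler divergence of the path measure
`P_N(x) = ρ(x_0) Π_{k<N} p(x_{k+1}|x_k)` from its time reversal
`Q_N(x) = P_N(x_N,…,x_0)` (the image of `P_N` under the involutive path-reversal map)
equals `N · Σ_b ρ(b) Σ_a p(a|b) [ln p(a|b) − ln p(b|a)]`.
Here `p a b` denotes the transition probability `p(a|b)`. -/
theorem markov_chain_path_relative_entropy_eq_entropy_production
    {S : Type*} [Fintype S] [Nonempty S] [DecidableEq S]
    (p : S → S → ℝ) (hp : ∀ a b, 0 < p a b) (hpsum : ∀ b, ∑ a, p a b = 1)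
    (ρ : S → ℝ) (hρ : ∀ b, 0 < ρ b) (hρsum : ∑ b, ρ b = 1)
    (hstat : ∀ a, ∑ b, p a b * ρ b = ρ a)
    (N : ℕ) (hN : 1 ≤ N)
    (P : (Fin (N + 1) → S) → ℝ)
    (hP : ∀ x, P x = ρ (x 0) * ∏ k : Fin N, p (x k.succ) (x k.castSucc))
    (Q : (Fin (N + 1) → S) → ℝ)
    (hQ : ∀ x, Q x = P (fun k => x k.rev)) :
    ∑ x : Fin (N + 1) → S, P x * Real.log (P x / Q x) =
      (N : ℝ) * ∑ b, ρ b * ∑ a, p a b * (Real.log (p a b) - Real.log (p b a)) := by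
  have hPW : ∀ x, P x = auxW p ρ N x := hP
  have key : ∀ x, P x * Real.log (P x / Q x) =
      auxW p ρ N x * Real.log (ρ (x 0)) - auxW p ρ N x * Real.log (ρ (x (Fin.last N))) +
      auxW p ρ N x * ∑ k : Fin N, (fun a b => Real.log (p a b) - Real.log (p b a))
        (x k.succ) (x k.castSucc) := by
    intro x
    rw [hQ, hPW, hPW, aux_rev]
    have h1 : ∀ k : Fin N, p (x k.succ) (x k.castSucc) ≠ 0 := fun k => (hp _ _).ne'
    have h2 : ∀ k : Fin N, p (x k.castSucc) (x k.succ) ≠ 0 := fun k => (hp _ _).ne'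
    have h3 := Finset.prod_ne_zero_iff.2 fun k (_ : k ∈ Finset.univ) => h1 k
    have h4 := Finset.prod_ne_zero_iff.2 fun k (_ : k ∈ Finset.univ) => h2 k
    have hl : Real.log (auxW p ρ N x / (ρ (x (Fin.last N)) *
        ∏ k : Fin N, p (x k.castSucc) (x k.succ))) =
        Real.log (ρ (x 0)) - Real.log (ρ (x (Fin.last N))) +
        ∑ k : Fin N, (Real.log (p (x k.succ) (x k.castSucc)) -
          Real.log (p (x k.castSucc) (x k.succ))) := by
      unfold auxW
      rw [Real.log_div (mul_ne_zero (hρ _).ne' h3) (mul_ne_zero (hρ _).ne' h4),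
        Real.log_mul (hρ _).ne' h3, Real.log_mul (hρ _).ne' h4,
        Real.log_prod fun k _ => h1 k, Real.log_prod fun k _ => h2 k,
        Finset.sum_sub_distrib]
      ring
    rw [hl]
    ring
  rw [Finset.sum_congr rfl fun x _ => key x, Finset.sum_add_distrib, Finset.sum_sub_distrib,
    aux_first p ρ hpsum (fun b => Real.log (ρ b)), aux_last p ρ hstat N (fun b => Real.log (ρ b)),
    aux_add p ρ hpsum hstat (fun a b => Real.log (p a b) - Real.log (p b a))]
  ring
end

section
/- The mean entropy production is nonnegative: Σ_{b∈S} ρ(b) Σ_{a∈S} p(a|b) [ln p(a|b) − ln p(b|a)] ≥ 0, and it equals 0 if and only if detailed balance holds, i.e. ρ(b) p(a|b) = ρ(a) p(b|a) for all a, b ∈ S. -/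
open scoped BigOperators

lemma ent_aux_nonneg (x y : ℝ) (hx : 0 < x) (hy : 0 < y) :
    0 ≤ x * (Real.log x - Real.log y) - x + y := by
  have h := Real.log_le_sub_one_of_pos (div_pos hy hx)
  rw [Real.log_div hy.ne' hx.ne'] at h
  have h2 := mul_le_mul_of_nonneg_left h hx.le
  have h3 : x * (y / x - 1) = y - x := by field_simp
  rw [h3] at h2
  linarith

lemma ent_aux_eq (x y : ℝ) (hx : 0 < x) (hy : 0 < y)
    (h0 : x * (Real.log x - Real.log y) - x + y = 0) : x = y := by
  by_contra hne
  have h := Real.log_lt_sub_one_of_pos (div_pos hy hx)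
    (fun h => hne ((div_eq_one_iff_eq hx.ne').1 h).symm)
  rw [Real.log_div hy.ne' hx.ne'] at h
  have h2 := mul_lt_mul_of_pos_left h hx
  have h3 : x * (y / x - 1) = y - x := by field_simp
  rw [h3] at h2
  linarith

/-- Nonnegativity of the mean entropy production of a stationary finite-state Markov
chain, and its vanishing characterizing detailed balance:
`Σ_b ρ(b) Σ_a p(a|b) [ln p(a|b) − ln p(b|a)] ≥ 0`, with equality if and only if
`ρ(b) p(a|b) = ρ(a) p(b|a)` for all `a, b`.
Here `p a b` denotes the transition probability `p(a|b)`. -/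
theorem markov_chain_entropy_production_nonneg_and_detailed_balance
    {S : Type*} [Fintype S] [Nonempty S]
    (p : S → S → ℝ) (hp : ∀ a b, 0 < p a b) (hpsum : ∀ b, ∑ a, p a b = 1)
    (ρ : S → ℝ) (hρ : ∀ b, 0 < ρ b) (hρsum : ∑ b, ρ b = 1)
    (hstat : ∀ a, ∑ b, p a b * ρ b = ρ a) :
    0 ≤ ∑ b, ρ b * ∑ a, p a b * (Real.log (p a b) - Real.log (p b a)) ∧
      (∑ b, ρ b * ∑ a, p a b * (Real.log (p a b) - Real.log (p b a)) = 0 ↔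
        ∀ a b, ρ b * p a b = ρ a * p b a) := by
  have key : ∑ b, ρ b * ∑ a, p a b * (Real.log (p a b) - Real.log (p b a)) =
      ∑ b, ∑ a, ((ρ b * p a b) * (Real.log (ρ b * p a b) - Real.log (ρ a * p b a))
        - ρ b * p a b + ρ a * p b a) := by
    have e : ∀ b a, (ρ b * p a b) * (Real.log (ρ b * p a b) - Real.log (ρ a * p b a))
        - ρ b * p a b + ρ a * p b a =
        ρ b * (p a b * (Real.log (p a b) - Real.log (p b a)))
        + (ρ b * Real.log (ρ b)) * p a b - Real.log (ρ a) * (p a b * ρ b)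
        - ρ b * p a b + ρ a * p b a := by
      intro b a
      rw [Real.log_mul (hρ b).ne' (hp a b).ne', Real.log_mul (hρ a).ne' (hp b a).ne']
      ring
    simp only [e, Finset.sum_add_distrib, Finset.sum_sub_distrib, ← Finset.mul_sum, hpsum]
    have h1 : ∑ b, ∑ a, Real.log (ρ a) * (p a b * ρ b) = ∑ a, Real.log (ρ a) * ρ a := by
      rw [Finset.sum_comm]
      simp only [← Finset.mul_sum, hstat]
    have h2 : ∑ b, ∑ a, ρ a * p b a = ∑ b, ρ b := by
      rw [Finset.sum_comm]
      simp only [← Finset.mul_sum, hpsum, mul_one]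
    rw [h1, h2]
    simp only [mul_one, mul_comm (Real.log _)]
    ring
  have nn : ∀ b a, 0 ≤ (ρ b * p a b) * (Real.log (ρ b * p a b) - Real.log (ρ a * p b a))
        - ρ b * p a b + ρ a * p b a := fun b a =>
    ent_aux_nonneg _ _ (mul_pos (hρ b) (hp a b)) (mul_pos (hρ a) (hp b a))
  rw [key]
  refine ⟨Finset.sum_nonneg fun b _ => Finset.sum_nonneg fun a _ => nn b a, ?_, ?_⟩
  · intro h a b
    have h1 := (Finset.sum_eq_zero_iff_of_nonneg
      (fun b _ => Finset.sum_nonneg fun a _ => nn b a)).1 h b (Finset.mem_univ b)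
    have h2 := (Finset.sum_eq_zero_iff_of_nonneg (fun a _ => nn b a)).1 h1 a (Finset.mem_univ a)
    exact ent_aux_eq _ _ (mul_pos (hρ b) (hp a b)) (mul_pos (hρ a) (hp b a)) h2
  · intro h
    refine Finset.sum_eq_zero fun b _ => Finset.sum_eq_zero fun a _ => ?_
    rw [h a b]
    ring
end
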